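/- (Occupation-time bounds, equation (2.34).) For every (z₊, z₋) ∈ 𝒟 and every θ ≥ 0, one has ∫₀^θ 1{z(ν) > 0} dν ≤ p₊(θ) ≤ ∫₀^θ 1{z(ν) ≥ 0} dν and ∫₀^θ 1{z(ν) < 0} dν ≤ p₋(θ) ≤ ∫₀^θ 1{z(ν) ≤ 0} dν. -/

import Mathlib

/-!
Where `z > 0`, one has `-z₊(p₊) < -z₋(p₋) ≤ λ₋(p₋) = λ₊(p₊)`, so `λ₊` is locally constant at `p₊`
and the balance `λ₊(p₊) = λ₋(p₋)` survives if all further time is given to `p₊`; by maximality `p₊`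
then grows at unit rate. Likewise `p₋` grows at unit rate where `z < 0`. Since `p₊` and `p₋` are
monotone, integrating their derivatives gives the two lower bounds on `p₊` and `p₋`, and
`p₊(θ) + p₋(θ) = θ` turns these into the upper bounds by passing to complements.
-/

open Set Filter MeasureTheory

/-- The Skorohod map: `Γ(z)(θ) = max(0, sup_{0 ≤ ν ≤ θ} (−z(ν)))`. -/
noncomputable def skorohod (z : ℝ → ℝ) (θ : ℝ) : ℝ :=
  max 0 (sSup ((fun ν => -z ν) '' Set.Icc 0 θ))

open scoped Topology

section Skorohod

lemma skorohod_nonneg (z : ℝ → ℝ) (θ : ℝ) : 0 ≤ skorohod z θ := le_max_left _ _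

lemma skorohod_zero (z : ℝ → ℝ) : skorohod z 0 = max 0 (-z 0) := by
  simp [skorohod]

variable {z : ℝ → ℝ}

lemma neg_le_skorohod (hz : ContinuousOn z (Ici 0)) {ν θ : ℝ} (hν : ν ∈ Icc 0 θ) :
    -z ν ≤ skorohod z θ :=
  have hbdd : BddAbove ((fun ν => -z ν) '' Icc 0 θ) :=
    isCompact_Icc.bddAbove_image (hz.mono Icc_subset_Ici_self).neg
  (le_csSup hbdd (mem_image_of_mem _ hν)).trans (le_max_right _ _)

lemma skorohod_le {θ c : ℝ} (hθ : 0 ≤ θ) (hc : 0 ≤ c) (h : ∀ ν ∈ Icc 0 θ, -z ν ≤ c) :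
    skorohod z θ ≤ c :=
  max_le hc (csSup_le ((nonempty_Icc.2 hθ).image _) (forall_mem_image.2 h))

lemma monotoneOn_skorohod (hz : ContinuousOn z (Ici 0)) : MonotoneOn (skorohod z) (Ici 0) :=
  fun _ hs _ _ hst => skorohod_le hs (skorohod_nonneg _ _) fun _ hν =>
    neg_le_skorohod hz (Icc_subset_Icc_right hst hν)

lemma skorohod_le_max (hz : ContinuousOn z (Ici 0)) {s t c : ℝ} (hs : 0 ≤ s) (hst : s ≤ t)
    (h : ∀ ν ∈ Icc s t, -z ν ≤ c) : skorohod z t ≤ max (skorohod z s) c := by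
  refine skorohod_le (hs.trans hst) (le_max_of_le_left (skorohod_nonneg _ _)) fun ν hν => ?_
  rcases le_total ν s with hνs | hsν
  · exact le_max_of_le_left (neg_le_skorohod hz ⟨hν.1, hνs⟩)
  · exact le_max_of_le_right (h ν ⟨hsν, hν.2⟩)

lemma eventually_skorohod_eq (hz : ContinuousOn z (Ici 0)) {a : ℝ} (ha : 0 ≤ a)
    (h : -z a < skorohod z a) : ∀ᶠ s in 𝓝[Ici 0] a, skorohod z s = skorohod z a := by
  obtain ⟨c, hzc, hc⟩ := exists_between h
  have hlt : ∀ᶠ ν in 𝓝[Ici 0] a, -z ν < c := (hz a ha).neg.eventually_lt_const hzc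
  have hpure : Tendsto (fun _ : ℝ => a) (𝓝[Ici 0] a) (𝓝[Ici 0] a) :=
    tendsto_const_pure.mono_right (pure_le_nhdsWithin ha)
  have huIcc : ∀ᶠ s in 𝓝[Ici 0] a, ∀ ν ∈ uIcc a s, -z ν < c :=
    (hpure.uIcc tendsto_id).eventually (eventually_smallSets_forall.2 hlt)
  filter_upwards [huIcc, self_mem_nhdsWithin] with s hs hs0
  rcases le_total s a with hsa | has
  · refine (monotoneOn_skorohod hz hs0 ha hsa).antisymm ?_
    have := skorohod_le_max hz hs0 hsa fun ν hν => (hs ν (Icc_subset_uIcc' hν)).le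
    exact (le_max_iff.1 this).resolve_right hc.not_ge
  · refine le_antisymm ?_ (monotoneOn_skorohod hz ha hs0 has)
    have := skorohod_le_max hz ha has fun ν hν => (hs ν (Icc_subset_uIcc hν)).le
    rwa [max_eq_left hc.le] at this

end Skorohod

section Monotone

lemma lipschitzOnWith_one_of_monotoneOn_sub {f : ℝ → ℝ} {s : Set ℝ} (hf : MonotoneOn f s)
    (hsub : MonotoneOn (fun x => x - f x) s) : LipschitzOnWith 1 f s := by
  refine LipschitzOnWith.of_le_add fun x hx y hy => ?_
  rcases le_total x y with hxy | hyx
  · exact (hf hx hy hxy).trans (le_add_of_nonneg_right dist_nonneg)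
  · have := hsub hy hx hyx
    rw [Real.dist_eq, abs_of_nonneg (sub_nonneg.2 hyx)]
    linarith

lemma hasDerivWithinAt_one_of_eventually {f : ℝ → ℝ} {s : Set ℝ} {x : ℝ}
    (h : ∀ᶠ y in 𝓝[s] x, f y = f x + (y - x)) : HasDerivWithinAt f 1 s x :=
  (((hasDerivWithinAt_id x s).sub_const x).const_add (f x)).congr_of_eventuallyEq h (by simp)

-- For a non-measurable `S` the integral on the left is the junk value `0`.
lemma integral_indicator_one_le_sub {f : ℝ → ℝ} {a b : ℝ} {S : Set ℝ} (hab : a ≤ b)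
    (hf : MonotoneOn f (Icc a b)) (hS : ∀ x ∈ S ∩ Ioo a b, HasDerivWithinAt f 1 (Ici x) x) :
    ∫ x in a..b, S.indicator (fun _ => (1 : ℝ)) x ≤ f b - f a := by
  rw [← uIcc_of_le hab] at hf
  have hderiv : ∫ x in a..b, deriv f x ≤ f b - f a := by
    have hmem := hf.intervalIntegral_deriv_mem_uIcc
    rw [uIcc_of_le (sub_nonneg.2 (hf left_mem_uIcc right_mem_uIcc hab))] at hmem
    exact hmem.2
  have hint := hf.intervalIntegrable_deriv.1.mono_set Ioo_subset_Ioc_self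
  have hle : ∀ᵐ x ∂volume.restrict (Ioo a b), S.indicator (fun _ => (1 : ℝ)) x ≤ deriv f x := by
    rw [ae_restrict_iff' measurableSet_Ioo]
    filter_upwards [hf.ae_differentiableWithinAt_of_mem] with x hdiff hx
    have hnhds : uIcc a b ∈ 𝓝 x := uIcc_of_le hab ▸ Icc_mem_nhds hx.1 hx.2
    refine indicator_apply_le' (fun hxS => ?_) fun _ => ?_
    · have hdf := ((hdiff (mem_of_mem_nhds hnhds)).differentiableAt hnhds).hasDerivAt
      exact ((uniqueDiffWithinAt_Ici x).eq_deriv _ (hS x ⟨hxS, hx⟩) hdf.hasDerivWithinAt).le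
    · rw [← derivWithin_of_mem_nhds hnhds]
      exact hf.derivWithin_nonneg
  refine le_trans ?_ hderiv
  simp only [intervalIntegral.integral_of_le hab, integral_Ioc_eq_integral_Ioo]
  exact integral_mono_of_nonneg (ae_of_all _ (indicator_nonneg fun _ _ => zero_le_one)) hint hle

lemma integral_indicator_compl_one {a b : ℝ} {S : Set ℝ} (hab : a ≤ b)
    (hS : NullMeasurableSet S (volume.restrict (Ioc a b))) :
    ∫ x in a..b, Sᶜ.indicator (fun _ => (1 : ℝ)) x =
      b - a - ∫ x in a..b, S.indicator (fun _ => (1 : ℝ)) x := by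
  have hint : IntervalIntegrable (S.indicator fun _ => (1 : ℝ)) volume a b :=
    (intervalIntegrable_iff_integrableOn_Ioc_of_le hab).2 ((integrable_const 1).indicator₀ hS)
  simp only [indicator_compl, Pi.sub_apply]
  rw [intervalIntegral.integral_sub intervalIntegrable_const hint]
  simp

end Monotone

/-- The splittings `ν + (θ - ν)` of the time `θ` for which `f` and `g` agree, recorded by the part
`ν` given to `f`. With `f = λ₊` and `g = λ₋` its maximum is `p₊(θ)`, and with the roles exchanged
its minimum is `p₋(θ)`. -/
def balanceSet (f g : ℝ → ℝ) (θ : ℝ) : Set ℝ :=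
  {ν ∈ Icc 0 θ | f ν = g (θ - ν)}

section Balance

variable {f g p q : ℝ → ℝ} {u v ν ν' θ : ℝ}

lemma sub_mem_balanceSet (hν : ν ∈ balanceSet f g θ) : θ - ν ∈ balanceSet g f θ :=
  ⟨⟨sub_nonneg.2 hν.1.2, sub_le_self θ hν.1.1⟩, by rw [sub_sub_cancel, hν.2]⟩

lemma isLeast_balanceSet_sub (hν : IsGreatest (balanceSet f g θ) ν) :
    IsLeast (balanceSet g f θ) (θ - ν) :=
  ⟨sub_mem_balanceSet hν.1, fun _ hν' => sub_le_comm.1 (hν.2 (sub_mem_balanceSet hν'))⟩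

lemma isGreatest_balanceSet_sub (hν : IsLeast (balanceSet f g θ) ν) :
    IsGreatest (balanceSet g f θ) (θ - ν) :=
  ⟨sub_mem_balanceSet hν.1, fun _ hν' => le_sub_comm.1 (hν.2 (sub_mem_balanceSet hν'))⟩

lemma eq_sub_of_isGreatest_of_isLeast {p q : ℝ} (hp : IsGreatest (balanceSet f g θ) p)
    (hq : IsLeast (balanceSet g f θ) q) : q = θ - p :=
  hq.unique (isLeast_balanceSet_sub hp)

lemma apply_eq_apply_of_isGreatest_of_isLeast {p q : ℝ} (hp : IsGreatest (balanceSet f g θ) p)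
    (hq : IsLeast (balanceSet g f θ) q) : f p = g q := by
  rw [eq_sub_of_isGreatest_of_isLeast hp hq, hp.1.2]

lemma add_mem_balanceSet {h : ℝ} (hν : ν ∈ balanceSet f g θ) (h0 : 0 ≤ ν + h)
    (hf : f (ν + h) = f ν) : ν + h ∈ balanceSet f g (θ + h) :=
  ⟨⟨h0, by linarith [hν.1.2]⟩, by rw [hf, hν.2, add_sub_add_right_eq_sub]⟩

lemma balanceSet_exchange (hf : MonotoneOn f (Ici 0)) (hg : MonotoneOn g (Ici 0))
    (hν : ν ∈ balanceSet f g u) (hν' : ν' ∈ balanceSet f g v) (huv : u ≤ v) (hνν' : ν' ≤ ν) :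
    ν ∈ balanceSet f g v ∧ ν' ∈ balanceSet f g u := by
  obtain ⟨⟨hν0, hνu⟩, hfν⟩ := hν
  obtain ⟨⟨hν'0, _⟩, hfν'⟩ := hν'
  have hf_le : f ν' ≤ f ν := hf hν'0 hν0 hνν'
  have hg_le {a b : ℝ} (ha : 0 ≤ a) (hab : a ≤ b) : g a ≤ g b := hg ha (ha.trans hab) hab
  have hνv : g (u - ν) ≤ g (v - ν) := hg_le (by linarith) (by linarith)
  have hνv' : g (v - ν) ≤ g (v - ν') := hg_le (by linarith) (by linarith)
  have hν'u : g (u - ν) ≤ g (u - ν') := hg_le (by linarith) (by linarith)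
  have hν'u' : g (u - ν') ≤ g (v - ν') := hg_le (by linarith) (by linarith)
  exact ⟨⟨⟨hν0, hνu.trans huv⟩, by linarith⟩, ⟨⟨hν'0, hνν'.trans hνu⟩, by linarith⟩⟩

lemma monotoneOn_of_isGreatest_balanceSet (hf : MonotoneOn f (Ici 0)) (hg : MonotoneOn g (Ici 0))
    (hp : ∀ θ ∈ Ici (0 : ℝ), IsGreatest (balanceSet f g θ) (p θ)) : MonotoneOn p (Ici 0) := by
  intro u hu v hv huv
  by_contra! hlt
  exact hlt.not_ge ((hp v hv).2 (balanceSet_exchange hf hg (hp u hu).1 (hp v hv).1 huv hlt.le).1)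

section Least

variable (hf : MonotoneOn f (Ici 0)) (hg : MonotoneOn g (Ici 0))
  (hq : ∀ θ ∈ Ici (0 : ℝ), IsLeast (balanceSet f g θ) (q θ))

include hf hg hq

lemma monotoneOn_of_isLeast_balanceSet : MonotoneOn q (Ici 0) := by
  intro u hu v hv huv
  by_contra! hlt
  exact hlt.not_ge ((hq u hu).2 (balanceSet_exchange hf hg (hq u hu).1 (hq v hv).1 huv hlt.le).2)

lemma monotoneOn_sub_of_isLeast_balanceSet : MonotoneOn (fun θ => θ - q θ) (Ici 0) :=
  monotoneOn_of_isGreatest_balanceSet hg hf fun θ hθ => isGreatest_balanceSet_sub (hq θ hθ)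

lemma continuousOn_of_isLeast_balanceSet : ContinuousOn q (Ici 0) :=
  (lipschitzOnWith_one_of_monotoneOn_sub (monotoneOn_of_isLeast_balanceSet hf hg hq)
    (monotoneOn_sub_of_isLeast_balanceSet hf hg hq)).continuousOn

lemma hasDerivWithinAt_one_of_isLeast_balanceSet (hu : 0 ≤ u) (hqu : 0 < q u)
    (hflat : ∀ᶠ ν in 𝓝 (q u), f ν = f (q u)) : HasDerivWithinAt q 1 (Ici u) u := by
  have hq_tendsto : Tendsto q (𝓝[≥] u) (𝓝 (q u)) :=
    (continuousOn_of_isLeast_balanceSet hf hg hq u hu).mono (Ici_subset_Ici.2 hu)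
  have hshift : Tendsto (fun s => q s + (u - s)) (𝓝[≥] u) (𝓝 (q u)) := by
    have : Tendsto (fun s => u - s) (𝓝[≥] u) (𝓝 0) :=
      (Continuous.tendsto' (by fun_prop) _ _ (by simp)).mono_left nhdsWithin_le_nhds
    simpa only [add_zero] using hq_tendsto.add this
  refine hasDerivWithinAt_one_of_eventually ?_
  filter_upwards [hq_tendsto.eventually hflat, hshift.eventually hflat,
    hshift.eventually_const_lt hqu, self_mem_nhdsWithin] with s hfs hfs' hpos hus
  have hs : 0 ≤ s := hu.trans hus
  have hsub_le : u - q u ≤ s - q s := monotoneOn_sub_of_isLeast_balanceSet hf hg hq hu hs hus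
  have hmem : q s + (u - s) ∈ balanceSet f g (s + (u - s)) :=
    add_mem_balanceSet (hq s hs).1 hpos.le (hfs'.trans hfs.symm)
  rw [add_sub_cancel] at hmem
  have hle : q u ≤ q s + (u - s) := (hq u hu).2 hmem
  linarith

end Least

section Greatest

variable (hf : MonotoneOn f (Ici 0)) (hg : MonotoneOn g (Ici 0))
  (hp : ∀ θ ∈ Ici (0 : ℝ), IsGreatest (balanceSet f g θ) (p θ))

include hf hg hp

lemma monotoneOn_sub_of_isGreatest_balanceSet : MonotoneOn (fun θ => θ - p θ) (Ici 0) :=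
  monotoneOn_of_isLeast_balanceSet hg hf fun θ hθ => isLeast_balanceSet_sub (hp θ hθ)

lemma continuousOn_of_isGreatest_balanceSet : ContinuousOn p (Ici 0) :=
  (lipschitzOnWith_one_of_monotoneOn_sub (monotoneOn_of_isGreatest_balanceSet hf hg hp)
    (monotoneOn_sub_of_isGreatest_balanceSet hf hg hp)).continuousOn

lemma hasDerivWithinAt_one_of_isGreatest_balanceSet (hu : 0 ≤ u)
    (hflat : ∀ᶠ ν in 𝓝[≥] (p u), f ν = f (p u)) : HasDerivWithinAt p 1 (Ici u) u := by
  have hshift : Tendsto (fun s => p u + (s - u)) (𝓝[≥] u) (𝓝[≥] (p u)) := by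
    refine tendsto_nhdsWithin_iff.2 ⟨?_, ?_⟩
    · exact (Continuous.tendsto' (by fun_prop) _ _ (by simp)).mono_left nhdsWithin_le_nhds
    · filter_upwards [self_mem_nhdsWithin] with s hs
      exact le_add_of_nonneg_right (sub_nonneg.2 (mem_Ici.1 hs))
  refine hasDerivWithinAt_one_of_eventually ?_
  filter_upwards [hshift.eventually hflat, self_mem_nhdsWithin] with s hfs hus
  have hs : 0 ≤ s := hu.trans hus
  have hsub_le : u - p u ≤ s - p s := monotoneOn_sub_of_isGreatest_balanceSet hf hg hp hu hs hus
  have hmem : p u + (s - u) ∈ balanceSet f g (u + (s - u)) :=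
    add_mem_balanceSet (hp u hu).1 (add_nonneg (hp u hu).1.1.1 (sub_nonneg.2 hus)) hfs
  rw [add_sub_cancel] at hmem
  exact le_antisymm (by linarith) ((hp s hs).2 hmem)

end Greatest

end Balance

section Occupation

variable {zp zm pp pm : ℝ → ℝ} {u θ : ℝ}
  (hzp : ContinuousOn zp (Ici 0)) (hzm : ContinuousOn zm (Ici 0))
  (hpp : ∀ θ ∈ Ici (0 : ℝ), IsGreatest (balanceSet (skorohod zp) (skorohod zm) θ) (pp θ))
  (hpm : ∀ θ ∈ Ici (0 : ℝ), IsLeast (balanceSet (skorohod zm) (skorohod zp) θ) (pm θ))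

include hzp hzm hpp hpm

lemma hasDerivWithinAt_one_of_pos (hu : 0 ≤ u) (hpos : 0 < zp (pp u) - zm (pm u)) :
    HasDerivWithinAt pp 1 (Ici u) u := by
  have hpu : 0 ≤ pp u := (hpp u hu).1.1.1
  have hlt : -zp (pp u) < skorohod zp (pp u) :=
    calc -zp (pp u) < -zm (pm u) := by linarith
      _ ≤ skorohod zm (pm u) := neg_le_skorohod hzm ⟨(hpm u hu).1.1.1, le_rfl⟩
      _ = skorohod zp (pp u) := (apply_eq_apply_of_isGreatest_of_isLeast (hpp u hu) (hpm u hu)).symm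
  exact hasDerivWithinAt_one_of_isGreatest_balanceSet (monotoneOn_skorohod hzp)
    (monotoneOn_skorohod hzm) hpp hu
    ((eventually_skorohod_eq hzp hpu hlt).filter_mono (nhdsWithin_mono _ (Ici_subset_Ici.2 hpu)))

lemma hasDerivWithinAt_one_of_neg (hzm0 : zm 0 ≤ 0) (hu : 0 ≤ u)
    (hneg : zp (pp u) - zm (pm u) < 0) : HasDerivWithinAt pm 1 (Ici u) u := by
  have hlt : -zm (pm u) < skorohod zm (pm u) :=
    calc -zm (pm u) < -zp (pp u) := by linarith
      _ ≤ skorohod zp (pp u) := neg_le_skorohod hzp ⟨(hpp u hu).1.1.1, le_rfl⟩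
      _ = skorohod zm (pm u) := apply_eq_apply_of_isGreatest_of_isLeast (hpp u hu) (hpm u hu)
  have hpos : 0 < pm u := by
    refine (hpm u hu).1.1.1.lt_of_ne fun h => ?_
    rw [← h, skorohod_zero, max_eq_right (neg_nonneg.2 hzm0)] at hlt
    exact hlt.false
  have hflat := eventually_skorohod_eq hzm hpos.le hlt
  rw [nhdsWithin_eq_nhds.2 (Ici_mem_nhds hpos)] at hflat
  exact hasDerivWithinAt_one_of_isLeast_balanceSet (monotoneOn_skorohod hzm)
    (monotoneOn_skorohod hzp) hpm hu hpos hflat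

lemma continuousOn_comp_sub_comp_of_balance :
    ContinuousOn (fun u => zp (pp u) - zm (pm u)) (Ici 0) := by
  have hpp_cont : ContinuousOn pp (Ici 0) := continuousOn_of_isGreatest_balanceSet
    (monotoneOn_skorohod hzp) (monotoneOn_skorohod hzm) hpp
  have hpm_cont : ContinuousOn pm (Ici 0) := continuousOn_of_isLeast_balanceSet
    (monotoneOn_skorohod hzm) (monotoneOn_skorohod hzp) hpm
  exact (hzp.comp hpp_cont fun u hu => (hpp u hu).1.1.1).sub
    (hzm.comp hpm_cont fun u hu => (hpm u hu).1.1.1)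

lemma integral_indicator_pos_le (hθ : 0 ≤ θ) :
    ∫ u in (0 : ℝ)..θ, {u | 0 < zp (pp u) - zm (pm u)}.indicator (fun _ => (1 : ℝ)) u ≤ pp θ := by
  have hmono : MonotoneOn pp (Ici 0) := monotoneOn_of_isGreatest_balanceSet
    (monotoneOn_skorohod hzp) (monotoneOn_skorohod hzm) hpp
  exact (integral_indicator_one_le_sub hθ (hmono.mono Icc_subset_Ici_self) fun u hu =>
    hasDerivWithinAt_one_of_pos hzp hzm hpp hpm hu.2.1.le hu.1).trans
      (sub_le_self _ (hpp 0 self_mem_Ici).1.1.1)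

lemma integral_indicator_neg_le (hzm0 : zm 0 ≤ 0) (hθ : 0 ≤ θ) :
    ∫ u in (0 : ℝ)..θ, {u | zp (pp u) - zm (pm u) < 0}.indicator (fun _ => (1 : ℝ)) u ≤ pm θ := by
  have hmono : MonotoneOn pm (Ici 0) := monotoneOn_of_isLeast_balanceSet
    (monotoneOn_skorohod hzm) (monotoneOn_skorohod hzp) hpm
  exact (integral_indicator_one_le_sub hθ (hmono.mono Icc_subset_Ici_self) fun u hu =>
    hasDerivWithinAt_one_of_neg hzp hzm hpp hpm hzm0 hu.2.1.le hu.1).trans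
      (sub_le_self _ (hpm 0 self_mem_Ici).1.1.1)

end Occupation

theorem occupation_time_bounds_general {zp zm pp pm : ℝ → ℝ}
    (hzp : ContinuousOn zp (Ici 0)) (hzm : ContinuousOn zm (Ici 0)) (hzm0 : zm 0 ≤ 0)
    (hpp : ∀ θ ∈ Ici (0 : ℝ),
      IsGreatest {ν ∈ Icc 0 θ | skorohod zp ν = skorohod zm (θ - ν)} (pp θ))
    (hpm : ∀ θ ∈ Ici (0 : ℝ),
      IsLeast {ν ∈ Icc 0 θ | skorohod zm ν = skorohod zp (θ - ν)} (pm θ)) :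
    ∀ θ ∈ Ici (0 : ℝ),
      (∫ ν in (0 : ℝ)..θ,
          indicator {u : ℝ | 0 < zp (pp u) - zm (pm u)} (fun _ => (1 : ℝ)) ν)
        ≤ pp θ ∧
      pp θ ≤
        ∫ ν in (0 : ℝ)..θ,
          indicator {u : ℝ | 0 ≤ zp (pp u) - zm (pm u)} (fun _ => (1 : ℝ)) ν ∧
      (∫ ν in (0 : ℝ)..θ,
          indicator {u : ℝ | zp (pp u) - zm (pm u) < 0} (fun _ => (1 : ℝ)) ν)
        ≤ pm θ ∧
      pm θ ≤
        ∫ ν in (0 : ℝ)..θ,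
          indicator {u : ℝ | zp (pp u) - zm (pm u) ≤ 0} (fun _ => (1 : ℝ)) ν := by
  intro θ hθ
  have hsum : pm θ = θ - pp θ := eq_sub_of_isGreatest_of_isLeast (hpp θ hθ) (hpm θ hθ)
  have hpos := integral_indicator_pos_le hzp hzm hpp hpm hθ
  have hneg := integral_indicator_neg_le hzp hzm hpp hpm hzm0 hθ
  have hmeas : AEMeasurable (fun u => zp (pp u) - zm (pm u)) (volume.restrict (Ioc 0 θ)) :=
    ((continuousOn_comp_sub_comp_of_balance hzp hzm hpp hpm).mono
      fun _ hu => hu.1.le).aemeasurable measurableSet_Ioc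
  have hnonneg := integral_indicator_compl_one hθ
    (nullMeasurableSet_lt hmeas (aemeasurable_const (b := 0)))
  have hnonpos := integral_indicator_compl_one hθ
    (nullMeasurableSet_lt (aemeasurable_const (b := 0)) hmeas)
  simp only [compl_ofPred, not_lt] at hnonneg hnonpos
  rw [hnonneg, hnonpos]
  refine ⟨hpos, ?_, hneg, ?_⟩ <;> linarith

/-- Occupation-time bounds (equation (2.34)): with `z = z₊ ∘ p₊ − z₋ ∘ p₋`, for `θ ≥ 0`,
`∫₀^θ 1{z > 0} ≤ p₊(θ) ≤ ∫₀^θ 1{z ≥ 0}` and `∫₀^θ 1{z < 0} ≤ p₋(θ) ≤ ∫₀^θ 1{z ≤ 0}`. -/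
theorem occupation_time_bounds
    (zp zm : ℝ → ℝ)
    (hzp : ContinuousOn zp (Set.Ici 0)) (hzm : ContinuousOn zm (Set.Ici 0))
    (hzp0 : zp 0 = 0) (hzm0 : zm 0 = 0)
    (hzpinf : Filter.liminf (fun θ => (zp θ : EReal)) Filter.atTop = ⊥)
    (hzminf : Filter.liminf (fun θ => (zm θ : EReal)) Filter.atTop = ⊥)
    (pp pm : ℝ → ℝ)
    (hpp : ∀ θ ∈ Set.Ici (0:ℝ),
      IsGreatest {ν ∈ Set.Icc 0 θ | skorohod zp ν = skorohod zm (θ - ν)} (pp θ))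
    (hpm : ∀ θ ∈ Set.Ici (0:ℝ),
      IsLeast {ν ∈ Set.Icc 0 θ | skorohod zm ν = skorohod zp (θ - ν)} (pm θ)) :
    ∀ θ ∈ Set.Ici (0:ℝ),
      (∫ ν in (0:ℝ)..θ,
          Set.indicator {u : ℝ | 0 < zp (pp u) - zm (pm u)} (fun _ => (1:ℝ)) ν)
        ≤ pp θ ∧
      pp θ ≤
        ∫ ν in (0:ℝ)..θ,
          Set.indicator {u : ℝ | 0 ≤ zp (pp u) - zm (pm u)} (fun _ => (1:ℝ)) ν ∧
      (∫ ν in (0:ℝ)..θ,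
          Set.indicator {u : ℝ | zp (pp u) - zm (pm u) < 0} (fun _ => (1:ℝ)) ν)
        ≤ pm θ ∧
      pm θ ≤
        ∫ ν in (0:ℝ)..θ,
          Set.indicator {u : ℝ | zp (pp u) - zm (pm u) ≤ 0} (fun _ => (1:ℝ)) ν :=
  occupation_time_bounds_general hzp hzm hzm0.le hpp hpm
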